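/- arXiv:2602.15471 — 2 statements merged into one kernel-verified Lean document; each statement's English description precedes it below -/
import Mathlib

section
/- Let 𝔥 > 1, set φ = 𝔥 + √(𝔥² − 1), and let a ∈ 𝔻 (identifying ℝ² with ℂ, with ā the complex conjugate of a). Then φ²|1 − āx|² − |x − a|² > 0 for every x in the closed unit disk, so the bubble u_a(x) = 2 log( 2φ(1−|a|²) / (φ²|1−āx|² − |x−a|²) ) is a smooth function on the closed disk, and u_a satisfies −Δu_a = −2e^{u_a} in 𝔻 and ∂_ν u_a + 2 = 2𝔥 e^{u_a/2} on ∂𝔻. -/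
open MeasureTheory Real Filter

noncomputable section

/-- The open unit disk in ℝ² ≅ ℂ. -/
def unitDisk : Set ℂ := Metric.ball 0 1

/-- The unit circle ∂𝔻. -/
def unitCircle : Set ℂ := Metric.sphere 0 1

/-- The closed unit disk. -/
def closedUnitDisk : Set ℂ := Metric.closedBall 0 1

/-- Directional derivative of `u` at `x` in direction `v`. -/
def pd (u : ℂ → ℝ) (v x : ℂ) : ℝ := fderiv ℝ u x v

/-- Laplacian of `u` at `x`. -/
def lap (u : ℂ → ℝ) (x : ℂ) : ℝ :=
  fderiv ℝ (fun y => pd u 1 y) x 1 + fderiv ℝ (fun y => pd u Complex.I y) x Complex.I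

/-- Squared norm of the gradient, |∇u|². -/
def gradSq (u : ℂ → ℝ) (x : ℂ) : ℝ := pd u 1 x ^ 2 + pd u Complex.I x ^ 2

/-- Outward normal derivative ∂_ν u(x) = ∇u(x)·x at a boundary point. -/
def nderiv (u : ℂ → ℝ) (x : ℂ) : ℝ := x.re * pd u 1 x + x.im * pd u Complex.I x

/-- Tangential derivative ∂_τ u(x) = ∇u(x)·(−x₂,x₁) at a boundary point. -/
def tderiv (u : ℂ → ℝ) (x : ℂ) : ℝ := -x.im * pd u 1 x + x.re * pd u Complex.I x

/-- Unit-speed parametrization of the unit circle. -/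
def bpt (θ : ℝ) : ℂ := Complex.exp ((θ : ℂ) * Complex.I)

/-- Integral over ∂𝔻 with respect to arclength. -/
def bint (f : ℂ → ℝ) : ℝ := ∫ θ in (0:ℝ)..(2 * π), f (bpt θ)

/-- A solution of the prescribed curvature problem for `(K, h)`. -/
def IsSolution (K h u : ℂ → ℝ) : Prop :=
  ContDiff ℝ 2 u ∧
  (∀ x ∈ unitDisk, -lap u x = 2 * K x * Real.exp (u x)) ∧
  (∀ x ∈ unitCircle, nderiv u x + 2 = 2 * h x * Real.exp (u x / 2))

/-- The auxiliary function Φ = H + √(H² + K). -/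
def Phi (K H : ℂ → ℝ) (x : ℂ) : ℝ := H x + Real.sqrt (H x ^ 2 + K x)

/-- `H` is the harmonic extension of `h`, C¹ up to the boundary. -/
def IsHarmExt (h H : ℂ → ℝ) : Prop :=
  ContDiff ℝ 1 H ∧ ContDiffOn ℝ 2 H unitDisk ∧
  (∀ x ∈ unitDisk, lap H x = 0) ∧ ∀ x ∈ unitCircle, H x = h x

/-- K_ε. -/
def Keps (K : ℂ → ℝ) (ε : ℝ) (x : ℂ) : ℝ := (K x - ε / 2) / (1 + ε)

/-- h_ε. -/
def heps (h : ℂ → ℝ) (ε : ℝ) (x : ℂ) : ℝ := h x / (1 + ε)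

/-- K̃_ε. -/
def Ktil (ε : ℝ) : ℝ := -ε / (2 * (1 + ε))

/-- h̃_ε. -/
def htil (ε : ℝ) : ℝ := 1 / (1 + ε)

/-- A solution of the perturbed problem (P_ε). -/
def IsPerturbedSolution (K h : ℂ → ℝ) (ε : ℝ) (u : ℂ → ℝ) : Prop :=
  ContDiff ℝ 2 u ∧
  (∀ x ∈ unitDisk, -lap u x + 2 * Ktil ε = 2 * Keps K ε x * Real.exp (u x)) ∧
  (∀ x ∈ unitCircle, nderiv u x + 2 * htil ε = 2 * heps h ε x * Real.exp (u x / 2))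

/-- The energy functional I. -/
def Ifun (K h u : ℂ → ℝ) : ℝ :=
  (∫ x in unitDisk, ((1/2) * gradSq u x - 2 * K x * Real.exp (u x))) +
  bint (fun x => 2 * u x - 4 * h x * Real.exp (u x / 2))

/-- The perturbation term T. -/
def Tfun (u : ℂ → ℝ) : ℝ :=
  ∫ x in unitDisk, ((1/2) * gradSq u x + Real.exp (u x) - u x)

/-- The perturbed functional I_ε. -/
def Ieps (K h : ℂ → ℝ) (ε : ℝ) (u : ℂ → ℝ) : ℝ := (Ifun K h u + ε * Tfun u) / (1 + ε)

/-- The bubble for constant curvatures K ≡ −1, geodesic curvature 𝔥, with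
φ = 𝔥 + √(𝔥² − 1): u_a(x) = 2 log( 2φ(1−|a|²) / (φ²|1−āx|² − |x−a|²) ). -/
def bubbleNeg (φ : ℝ) (a x : ℂ) : ℝ :=
  2 * Real.log (2 * φ * (1 - ‖a‖ ^ 2) /
    (φ ^ 2 * ‖1 - (starRingEnd ℂ) a * x‖ ^ 2 - ‖x - a‖ ^ 2))

/-!
Write `D` for the denominator of the bubble and `c` for its numerator, so `u = 2 log (c / D)` and
`e^u = c² / D²`. Then `-Δu = -2 e^u` amounts to `|∇D|² - D ΔD = c²`, and, on the circle,
`∂_ν u + 2 = 2𝔥 e^{u/2}` amounts to `D - ∂_ν D = 𝔥 c`. Now `D` is a quadratic polynomial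
`A ‖x‖² - 2 ⟪b, x⟫ + C`, for which `|∇D|² - D ΔD` is the constant `4 (‖b‖² - A C)` and
`D - ∂_ν D` is the constant `C - A` on the circle. Positivity of `D` comes from the identity
`‖1 - ā x‖² - ‖x - a‖² = (1 - ‖a‖²) (1 - ‖x‖²)`.
-/

open scoped InnerProductSpace Topology

section LogConformalFactor

/-- The function `u` for which the conformal metric `e^u |dx|²` is `(c / f)² |dx|²`.
`Real.log` ignores signs, so this describes `c / f` only up to sign. -/
def logConformalFactor {E : Type*} (c : ℝ) (f : E → ℝ) (x : E) : ℝ := 2 * Real.log (c / f x)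

theorem exp_logConformalFactor {E : Type*} {c : ℝ} {f : E → ℝ} {x : E} (hc : c ≠ 0) (hx : f x ≠ 0) :
    Real.exp (logConformalFactor c f x) = (c / f x) ^ 2 := by
  rw [logConformalFactor, two_mul, Real.exp_add, Real.exp_log_eq_abs (div_ne_zero hc hx),
    abs_mul_abs_self, sq]

theorem exp_logConformalFactor_div_two {E : Type*} {c : ℝ} {f : E → ℝ} {x : E} (hx : 0 < c / f x) :
    Real.exp (logConformalFactor c f x / 2) = c / f x := by
  rw [logConformalFactor, mul_div_cancel_left₀ _ two_ne_zero, Real.exp_log hx]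

variable {E : Type*} [NormedAddCommGroup E] [NormedSpace ℝ E]

theorem contDiffOn_logConformalFactor {c : ℝ} {f : E → ℝ} {s : Set E} {n : WithTop ℕ∞}
    (hf : ContDiffOn ℝ n f s) (hc : c ≠ 0) (hs : ∀ x ∈ s, f x ≠ 0) :
    ContDiffOn ℝ n (logConformalFactor c f) s :=
  contDiffOn_const.mul <| (contDiffOn_const.div hf hs).log fun x hx => div_ne_zero hc (hs x hx)

theorem hasFDerivAt_logConformalFactor {c : ℝ} {f : E → ℝ} {f' : E →L[ℝ] ℝ} {x : E}
    (hf : HasFDerivAt f f' x) (hc : c ≠ 0) (hx : f x ≠ 0) :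
    HasFDerivAt (logConformalFactor c f) ((-2 / f x) • f') x := by
  have hlog : HasDerivAt (fun t => 2 * Real.log (c / t)) (-2 / f x) (f x) := by
    refine ((((hasDerivAt_inv hx).const_mul c).log
      (mul_ne_zero hc (inv_ne_zero hx))).const_mul 2).congr_deriv ?_
    field_simp
  exact hlog.comp_hasFDerivAt x hf

end LogConformalFactor

section PlanarDerivatives

variable {c : ℝ} {f : ℂ → ℝ} {x : ℂ}

theorem nderiv_eq_pd_self (u : ℂ → ℝ) (x : ℂ) : nderiv u x = pd u x x := by
  have hx : x = x.re • (1 : ℂ) + x.im • Complex.I := by simp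
  conv_rhs => rw [pd, hx, map_add, map_smul, map_smul, ← hx]
  rfl

theorem pd_logConformalFactor (hf : DifferentiableAt ℝ f x) (hc : c ≠ 0) (hx : f x ≠ 0) (v : ℂ) :
    pd (logConformalFactor c f) v x = -2 * pd f v x / f x := by
  rw [pd, (hasFDerivAt_logConformalFactor hf.hasFDerivAt hc hx).fderiv,
    smul_apply, smul_eq_mul, div_mul_eq_mul_div, pd]

theorem nderiv_logConformalFactor_add_two (hf : DifferentiableAt ℝ f x) (hc : c ≠ 0)
    (hx : f x ≠ 0) :
    nderiv (logConformalFactor c f) x + 2 = 2 * ((f x - nderiv f x) / f x) := by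
  rw [nderiv_eq_pd_self, nderiv_eq_pd_self, pd_logConformalFactor hf hc hx]
  field

theorem differentiableAt_pd (hf : ContDiffAt ℝ 2 f x) (v : ℂ) :
    DifferentiableAt ℝ (fun y => pd f v y) x :=
  ((hf.fderiv_right (m := 1) le_rfl).differentiableAt one_ne_zero).clm_apply
    (differentiableAt_const v)

theorem fderiv_pd_logConformalFactor (hf : ContDiffAt ℝ 2 f x) (hc : c ≠ 0) (hx : f x ≠ 0)
    (v w : ℂ) :
    fderiv ℝ (fun y => pd (logConformalFactor c f) v y) x w =
      2 * (pd f v x * pd f w x - f x * fderiv ℝ (fun y => pd f v y) x w) / f x ^ 2 := by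
  have hpd : (fun y => pd (logConformalFactor c f) v y) =ᶠ[𝓝 x]
      fun y => -2 * pd f v y * (f y)⁻¹ := by
    filter_upwards [hf.eventually (by simp), hf.continuousAt.eventually_ne hx] with y hfy hy
    rw [pd_logConformalFactor (hfy.differentiableAt two_ne_zero) hc hy, div_eq_mul_inv]
  have hinv : HasFDerivAt (fun y => (f y)⁻¹) (-(f x ^ 2)⁻¹ • fderiv ℝ f x) x :=
    (hasDerivAt_inv hx).comp_hasFDerivAt x (hf.differentiableAt two_ne_zero).hasFDerivAt
  have hprod := ((differentiableAt_pd hf v).hasFDerivAt.const_mul (-2)).fun_mul hinv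
  rw [hpd.fderiv_eq, hprod.fderiv]
  simp only [pd, add_apply, smul_apply, smul_eq_mul]
  field

theorem lap_logConformalFactor (hf : ContDiffAt ℝ 2 f x) (hc : c ≠ 0) (hx : f x ≠ 0) :
    lap (logConformalFactor c f) x = 2 * (gradSq f x - f x * lap f x) / f x ^ 2 := by
  simp only [lap, gradSq, fderiv_pd_logConformalFactor hf hc hx]
  ring

end PlanarDerivatives

section SphereQuadratic

variable {E : Type*} [NormedAddCommGroup E] [InnerProductSpace ℝ E]

/-- The quadratic polynomials whose Hessian is a multiple of the identity. In the nondegenerate case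
the zero set is a sphere, or a hyperplane if `A = 0`; the denominator of a bubble has this form. -/
def sphereQuadratic (A : ℝ) (b : E) (C : ℝ) (x : E) : ℝ := A * ‖x‖ ^ 2 - 2 * ⟪b, x⟫_ℝ + C

theorem contDiff_sphereQuadratic (A : ℝ) (b : E) (C : ℝ) {n : WithTop ℕ∞} :
    ContDiff ℝ n (sphereQuadratic A b C) :=
  ((contDiff_const.mul (contDiff_norm_sq ℝ)).sub
    (contDiff_const.mul (contDiff_const.inner ℝ contDiff_id))).add contDiff_const

theorem hasFDerivAt_sphereQuadratic (A : ℝ) (b : E) (C : ℝ) (x : E) :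
    HasFDerivAt (sphereQuadratic A b C) ((2 : ℝ) • innerSL ℝ (A • x - b)) x := by
  have hnorm := (hasStrictFDerivAt_norm_sq x).hasFDerivAt.const_mul A
  have hinner := (innerSL ℝ b).hasFDerivAt (x := x).const_mul 2
  refine ((hnorm.sub hinner).add_const C).congr_fderiv ?_
  ext v
  simp only [sub_apply, smul_apply, innerSL_apply_apply, smul_eq_mul, inner_sub_left,
    real_inner_smul_left, nsmul_eq_mul, Nat.cast_ofNat]
  ring

variable (A : ℝ) (b : ℂ) (C : ℝ)

theorem pd_sphereQuadratic (v x : ℂ) :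
    pd (sphereQuadratic A b C) v x = 2 * ⟪A • x - b, v⟫_ℝ := by
  rw [pd, (hasFDerivAt_sphereQuadratic A b C x).fderiv]
  rfl

theorem gradSq_sphereQuadratic (x : ℂ) :
    gradSq (sphereQuadratic A b C) x = 4 * ‖A • x - b‖ ^ 2 := by
  have hinner (w : ℂ) : ⟪w, 1⟫_ℝ ^ 2 + ⟪w, Complex.I⟫_ℝ ^ 2 = ‖w‖ ^ 2 := by
    rw [Complex.sq_norm, Complex.normSq_apply]
    simp [Complex.inner, sq]
  rw [gradSq, pd_sphereQuadratic, pd_sphereQuadratic, ← hinner]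
  ring

theorem fderiv_pd_sphereQuadratic (v w x : ℂ) :
    fderiv ℝ (fun y => pd (sphereQuadratic A b C) v y) x w = 2 * A * ⟪v, w⟫_ℝ := by
  have hinner : HasFDerivAt (fun y : ℂ => 2 * ⟪v, A • y - b⟫_ℝ) ((2 * A) • innerSL ℝ v) x := by
    simpa only [innerSL_apply_apply, smul_smul, inner_sub_right, real_inner_smul_right] using
      (((innerSL ℝ v).hasFDerivAt (x := x).const_mul A).sub_const ⟪v, b⟫_ℝ).const_mul 2
  simp only [pd_sphereQuadratic, real_inner_comm v]
  rw [hinner.fderiv, smul_apply, innerSL_apply_apply, smul_eq_mul]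

theorem lap_sphereQuadratic (x : ℂ) : lap (sphereQuadratic A b C) x = 4 * A := by
  rw [lap, fderiv_pd_sphereQuadratic, fderiv_pd_sphereQuadratic, real_inner_self_eq_norm_sq,
    real_inner_self_eq_norm_sq, norm_one, Complex.norm_I]
  ring

theorem gradSq_sub_mul_lap_sphereQuadratic (x : ℂ) :
    gradSq (sphereQuadratic A b C) x - sphereQuadratic A b C x * lap (sphereQuadratic A b C) x =
      4 * (‖b‖ ^ 2 - A * C) := by
  rw [gradSq_sphereQuadratic, lap_sphereQuadratic, sphereQuadratic, norm_sub_sq_real,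
    real_inner_smul_left, real_inner_comm, norm_smul, mul_pow, Real.norm_eq_abs, sq_abs]
  ring

theorem sphereQuadratic_sub_nderiv {x : ℂ} (hx : ‖x‖ = 1) :
    sphereQuadratic A b C x - nderiv (sphereQuadratic A b C) x = C - A := by
  rw [nderiv_eq_pd_self, pd_sphereQuadratic, sphereQuadratic, inner_sub_left,
    real_inner_smul_left, real_inner_self_eq_norm_sq, hx]
  ring

end SphereQuadratic

section Bubble

/-- The denominator of the bubble, so that `bubbleNeg φ a` is a `logConformalFactor`. -/
def bubbleDenom (φ : ℝ) (a x : ℂ) : ℝ :=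
  φ ^ 2 * ‖1 - (starRingEnd ℂ) a * x‖ ^ 2 - ‖x - a‖ ^ 2

theorem bubbleNeg_eq_logConformalFactor (φ : ℝ) (a : ℂ) :
    bubbleNeg φ a = logConformalFactor (2 * φ * (1 - ‖a‖ ^ 2)) (bubbleDenom φ a) :=
  rfl

theorem norm_one_sub_conj_mul_sq (a x : ℂ) :
    ‖1 - (starRingEnd ℂ) a * x‖ ^ 2 = 1 - 2 * ⟪a, x⟫_ℝ + ‖a‖ ^ 2 * ‖x‖ ^ 2 := by
  rw [norm_sub_sq_real, norm_mul, Complex.norm_conj, mul_pow, Complex.inner, Complex.inner]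
  simp [mul_comm]

theorem norm_one_sub_conj_mul_sq_sub_norm_sub_sq (a x : ℂ) :
    ‖1 - (starRingEnd ℂ) a * x‖ ^ 2 - ‖x - a‖ ^ 2 = (1 - ‖a‖ ^ 2) * (1 - ‖x‖ ^ 2) := by
  rw [norm_one_sub_conj_mul_sq, norm_sub_sq_real, real_inner_comm]
  ring

theorem bubbleDenom_eq_sphereQuadratic (φ : ℝ) (a : ℂ) :
    bubbleDenom φ a =
      sphereQuadratic (φ ^ 2 * ‖a‖ ^ 2 - 1) ((φ ^ 2 - 1) • a) (φ ^ 2 - ‖a‖ ^ 2) := by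
  ext x
  rw [bubbleDenom, sphereQuadratic, norm_one_sub_conj_mul_sq, norm_sub_sq_real,
    real_inner_comm a x, real_inner_smul_left]
  ring

variable {φ : ℝ} {a x : ℂ}

theorem bubbleDenom_pos (hφ : 1 < φ ^ 2) (ha : ‖a‖ < 1) (hx : ‖x‖ ≤ 1) :
    0 < bubbleDenom φ a x := by
  have hax : ‖(starRingEnd ℂ) a * x‖ < 1 := by
    rw [norm_mul, Complex.norm_conj]
    exact mul_lt_one_of_nonneg_of_lt_one_left (norm_nonneg a) ha hx
  have hne : 1 - (starRingEnd ℂ) a * x ≠ 0 := fun h => by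
    simp [← sub_eq_zero.mp h] at hax
  calc
    0 < (φ ^ 2 - 1) * ‖1 - (starRingEnd ℂ) a * x‖ ^ 2 :=
      mul_pos (sub_pos.mpr hφ) (pow_pos (norm_pos_iff.mpr hne) 2)
    _ ≤ (φ ^ 2 - 1) * ‖1 - (starRingEnd ℂ) a * x‖ ^ 2 + (1 - ‖a‖ ^ 2) * (1 - ‖x‖ ^ 2) :=
      le_add_of_nonneg_right <| mul_nonneg
        (sub_nonneg.mpr (pow_le_one₀ (norm_nonneg a) ha.le))
        (sub_nonneg.mpr (pow_le_one₀ (norm_nonneg x) hx))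
    _ = bubbleDenom φ a x := by
      rw [← norm_one_sub_conj_mul_sq_sub_norm_sub_sq, bubbleDenom]
      ring

theorem contDiff_bubbleDenom (φ : ℝ) (a : ℂ) {n : WithTop ℕ∞} : ContDiff ℝ n (bubbleDenom φ a) :=
  bubbleDenom_eq_sphereQuadratic φ a ▸ contDiff_sphereQuadratic _ _ _

theorem gradSq_sub_mul_lap_bubbleDenom (φ : ℝ) (a x : ℂ) :
    gradSq (bubbleDenom φ a) x - bubbleDenom φ a x * lap (bubbleDenom φ a) x =
      (2 * φ * (1 - ‖a‖ ^ 2)) ^ 2 := by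
  rw [bubbleDenom_eq_sphereQuadratic, gradSq_sub_mul_lap_sphereQuadratic, norm_smul, mul_pow,
    Real.norm_eq_abs, sq_abs]
  ring

theorem bubbleDenom_sub_nderiv (φ : ℝ) (a : ℂ) (hx : ‖x‖ = 1) :
    bubbleDenom φ a x - nderiv (bubbleDenom φ a) x = (φ ^ 2 + 1) * (1 - ‖a‖ ^ 2) := by
  rw [bubbleDenom_eq_sphereQuadratic, sphereQuadratic_sub_nderiv _ _ _ hx]
  ring

theorem lap_bubbleNeg (hc : 2 * φ * (1 - ‖a‖ ^ 2) ≠ 0) (hD : bubbleDenom φ a x ≠ 0) :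
    lap (bubbleNeg φ a) x = 2 * Real.exp (bubbleNeg φ a x) := by
  rw [bubbleNeg_eq_logConformalFactor,
    lap_logConformalFactor (contDiff_bubbleDenom φ a).contDiffAt hc hD,
    gradSq_sub_mul_lap_bubbleDenom, exp_logConformalFactor hc hD, div_pow, mul_div_assoc]

theorem nderiv_bubbleNeg_add_two {𝔥 : ℝ} (h𝔥 : 2 * 𝔥 * φ = φ ^ 2 + 1)
    (hc : 0 < 2 * φ * (1 - ‖a‖ ^ 2)) (hD : 0 < bubbleDenom φ a x) (hx : ‖x‖ = 1) :
    nderiv (bubbleNeg φ a) x + 2 = 2 * 𝔥 * Real.exp (bubbleNeg φ a x / 2) := by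
  have hdiff : DifferentiableAt ℝ (bubbleDenom φ a) x :=
    (contDiff_bubbleDenom φ a (n := 1)).differentiable one_ne_zero x
  rw [bubbleNeg_eq_logConformalFactor, nderiv_logConformalFactor_add_two hdiff hc.ne' hD.ne',
    bubbleDenom_sub_nderiv φ a hx, exp_logConformalFactor_div_two (div_pos hc hD), ← h𝔥]
  ring

end Bubble

theorem two_mul_mul_add_sqrt_sq_sub_one {h : ℝ} (hh : 1 ≤ h ^ 2) :
    2 * h * (h + √(h ^ 2 - 1)) = (h + √(h ^ 2 - 1)) ^ 2 + 1 := by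
  linear_combination -Real.sq_sqrt (sub_nonneg.mpr hh)

/-- The bubbles u_a are smooth on the closed disk and solve the problem with
K ≡ −1 and constant geodesic curvature 𝔥. -/
theorem bubble_is_solution
    (𝔥 : ℝ) (h𝔥 : 1 < 𝔥) (φ : ℝ) (hφ : φ = 𝔥 + Real.sqrt (𝔥 ^ 2 - 1))
    (a : ℂ) (ha : a ∈ unitDisk) :
    (∀ x ∈ closedUnitDisk,
      0 < φ ^ 2 * ‖1 - (starRingEnd ℂ) a * x‖ ^ 2 - ‖x - a‖ ^ 2) ∧
    ContDiffOn ℝ (⊤ : ℕ∞) (bubbleNeg φ a) closedUnitDisk ∧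
    (∀ x ∈ unitDisk, -lap (bubbleNeg φ a) x = -2 * Real.exp (bubbleNeg φ a x)) ∧
    (∀ x ∈ unitCircle,
      nderiv (bubbleNeg φ a) x + 2 = 2 * 𝔥 * Real.exp (bubbleNeg φ a x / 2)) := by
  have hφ_one : 1 < φ := hφ ▸ lt_add_of_lt_of_nonneg h𝔥 (Real.sqrt_nonneg _)
  have h𝔥φ : 2 * 𝔥 * φ = φ ^ 2 + 1 :=
    hφ ▸ two_mul_mul_add_sqrt_sq_sub_one (one_lt_pow₀ h𝔥 two_ne_zero).le
  have ha_norm : ‖a‖ < 1 := mem_ball_zero_iff.mp ha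
  have hc : 0 < 2 * φ * (1 - ‖a‖ ^ 2) :=
    mul_pos (by linarith) (sub_pos.mpr (pow_lt_one₀ (norm_nonneg a) ha_norm two_ne_zero))
  have hD (x : ℂ) (hx : x ∈ closedUnitDisk) : 0 < bubbleDenom φ a x :=
    bubbleDenom_pos (one_lt_pow₀ hφ_one two_ne_zero) ha_norm (mem_closedBall_zero_iff.mp hx)
  refine ⟨hD, ?smooth, fun x hx => ?interior, fun x hx => ?boundary⟩
  case smooth =>
    exact contDiffOn_logConformalFactor (contDiff_bubbleDenom φ a).contDiffOn hc.ne'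
      fun x hx => (hD x hx).ne'
  case interior =>
    rw [lap_bubbleNeg hc.ne' (hD x (Metric.ball_subset_closedBall hx)).ne', neg_mul]
  case boundary =>
    exact nderiv_bubbleNeg_add_two h𝔥φ hc (hD x (Metric.sphere_subset_closedBall hx))
      (mem_sphere_zero_iff_norm.mp hx)

end
end

section
/- ∫_𝔻 x₁ log( (1−x₁)² + x₂² ) dx = −π/2, i.e. the integral of x₁·log|1−x|² over the unit disk (identifying x = x₁ + i x₂ ∈ ℂ) equals −π/2. -/
open MeasureTheory Real Filter

noncomputable section

/-!
Polar coordinates turn the integral over the disk into a radial integral of circle averages. With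
`f x = log (1 - x)`, the integrand is `2 Re x · Re (f x) = Re (x f x) + Re (conj x · f x)`. On the
circle `|x| = r` the holomorphic `x f x` has mean `0`, while `conj x · f x = r² f x / x` has
mean `r² · deriv f 0 = -r²` by Cauchy's formula, so the integral is `2π ∫₀¹ r (-r²) dr = -π / 2`.
-/

section LogNorm

variable {E : Type*} [NormedAddCommGroup E] [NormedSpace ℝ E] [FiniteDimensional ℝ E]
  [Nontrivial E] [MeasurableSpace E] [BorelSpace E] (μ : Measure E) [μ.IsAddHaarMeasure]

lemma integrableOn_ball_log_norm (r : ℝ) :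
    IntegrableOn (fun x : E ↦ log ‖x‖) (Metric.ball 0 r) μ := by
  rw [integrableOn_fun_norm_addHaar μ (f := log)]
  rcases le_or_gt r 0 with hr | hr
  · simp [Set.Ioo_eq_empty_of_le hr]
  · rw [← intervalIntegrable_iff_integrableOn_Ioo_of_le hr.le]
    exact intervalIntegral.intervalIntegrable_log'.continuousOn_mul (by fun_prop)

lemma integrableOn_ball_log_norm_sub (a c : E) (r : ℝ) :
    IntegrableOn (fun x : E ↦ log ‖x - a‖) (Metric.ball c r) μ := by
  have integrableOn_ball_center (s : ℝ) :
      IntegrableOn (fun x : E ↦ log ‖x - a‖) (Metric.ball a s) μ := by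
    have h := (measurePreserving_sub_right μ a).integrableOn_comp_preimage
      (MeasurableEquiv.subRight a).measurableEmbedding (f := fun x : E ↦ log ‖x‖)
      (s := Metric.ball 0 s)
    have preimage_ball : (· - a) ⁻¹' Metric.ball 0 s = Metric.ball a s := by
      ext x; simp [dist_eq_norm]
    rw [preimage_ball] at h
    exact h.2 (integrableOn_ball_log_norm μ s)
  exact (integrableOn_ball_center (r + dist c a)).mono_set (Metric.ball_subset_ball' le_rfl)

end LogNorm

section Polar

variable {E : Type*} [NormedAddCommGroup E] [NormedSpace ℝ E]

lemma integrableOn_comp_polarCoord_symm {f : ℝ × ℝ → E} :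
    IntegrableOn (fun p ↦ p.1 • f (polarCoord.symm p)) polarCoord.target ↔ Integrable f := by
  have h := integrableOn_image_iff_integrableOn_abs_det_fderiv_smul volume
    polarCoord.open_target.measurableSet
    (fun p _ ↦ (hasFDerivAt_polarCoord_symm p).hasFDerivWithinAt) polarCoord.symm.injOn f
  rw [polarCoord.symm_image_target_eq_source,
    integrableOn_congr_set_ae polarCoord_source_ae_eq_univ, integrableOn_univ] at h
  rw [h]
  refine integrableOn_congr_fun (fun p hp ↦ ?_) polarCoord.open_target.measurableSet
  rw [det_fderivPolarCoordSymm, abs_of_pos hp.1]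

lemma integrableOn_comp_complexPolarCoord_symm {f : ℂ → E} :
    IntegrableOn (fun p ↦ p.1 • f (Complex.polarCoord.symm p)) polarCoord.target ↔
      Integrable f := by
  rw [← Complex.volume_preserving_equiv_real_prod.symm.integrable_comp_emb
    Complex.measurableEquivRealProd.symm.measurableEmbedding, ← integrableOn_comp_polarCoord_symm]
  rfl

lemma circleMap_zero_eq_polarCoord_symm (r θ : ℝ) :
    circleMap 0 r θ = Complex.polarCoord.symm (r, θ) := by
  simp [circleMap_zero, Complex.exp_mul_I]

lemma setIntegral_Ioo_circleMap_eq_circleAverage (f : ℂ → E) (c : ℂ) (r : ℝ) :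
    ∫ θ in Set.Ioo (-π) π, f (circleMap c r θ) = (2 * π) • circleAverage f c r := by
  rw [circleAverage_eq_integral_add (-π), smul_inv_smul₀ (by positivity),
    intervalIntegral.integral_comp_add_right (fun θ ↦ f (circleMap c r θ)),
    show 0 + -π = -π by ring, show 2 * π + -π = π by ring,
    intervalIntegral.integral_of_le (by linarith [pi_pos]), integral_Ioc_eq_integral_Ioo]

variable {f : ℂ → E}

lemma integral_eq_integral_circleAverage_zero (hf : Integrable f) :
    ∫ z, f z = (2 * π) • ∫ r in Set.Ioi (0 : ℝ), r • circleAverage f 0 r := by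
  calc ∫ z, f z
      = ∫ p in Set.Ioi (0 : ℝ) ×ˢ Set.Ioo (-π) π, p.1 • f (Complex.polarCoord.symm p) :=
        (Complex.integral_comp_polarCoord_symm f).symm
    _ = ∫ r in Set.Ioi (0 : ℝ), ∫ θ in Set.Ioo (-π) π, r • f (circleMap 0 r θ) := by
        simp only [circleMap_zero_eq_polarCoord_symm]
        exact setIntegral_prod _ (integrableOn_comp_complexPolarCoord_symm.2 hf)
    _ = (2 * π) • ∫ r in Set.Ioi (0 : ℝ), r • circleAverage f 0 r := by
        simp_rw [integral_smul, setIntegral_Ioo_circleMap_eq_circleAverage, smul_comm _ (2 * π),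
          integral_smul]

theorem integral_eq_integral_circleAverage (hf : Integrable f) (c : ℂ) :
    ∫ z, f z = (2 * π) • ∫ r in Set.Ioi (0 : ℝ), r • circleAverage f c r := by
  rw [← integral_add_right_eq_self f c,
    integral_eq_integral_circleAverage_zero (hf.comp_add_right c)]
  simp only [circleAverage_map_add_const]

lemma circleAverage_indicator_ball (f : ℂ → E) (c : ℂ) (R : ℝ) {r : ℝ} (hr : 0 ≤ r) :
    circleAverage ((Metric.ball c R).indicator f) c r =
      (Set.Iio R).indicator (circleAverage f c) r := by
  have mem_ball_iff (θ : ℝ) : circleMap c r θ ∈ Metric.ball c R ↔ r < R := by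
    simp [Complex.dist_eq, abs_of_nonneg hr]
  by_cases hrR : r < R <;> simp [circleAverage, Set.indicator, mem_ball_iff, hrR]

theorem setIntegral_ball_eq_integral_circleAverage {c : ℂ} {R : ℝ}
    (hf : IntegrableOn f (Metric.ball c R)) :
    ∫ z in Metric.ball c R, f z =
      (2 * π) • ∫ r in Set.Ioo 0 R, r • circleAverage f c r := by
  rw [← integral_indicator measurableSet_ball,
    integral_eq_integral_circleAverage (hf.integrable_indicator measurableSet_ball) c,
    ← Set.Ioi_inter_Iio, ← setIntegral_indicator measurableSet_Iio]
  congr 1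
  refine setIntegral_congr_fun measurableSet_Ioi fun r (hr : 0 < r) ↦ ?_
  simp only [circleAverage_indicator_ball f c R hr.le]
  exact (Set.indicator_smul_apply (Set.Iio R) (fun r ↦ r) (circleAverage f c) r).symm

end Polar

section Cauchy

open scoped ComplexConjugate

variable {c : ℂ} {R : ℝ}

theorem circleAverage_conj_sub_smul_eq_deriv {E : Type*} [NormedAddCommGroup E] [NormedSpace ℂ E]
    [CompleteSpace E] {f : ℂ → E} (hf : DiffContOnCl ℂ f (Metric.ball c |R|)) :
    circleAverage (fun z ↦ conj (z - c) • f z) c R = (R : ℂ) ^ 2 • deriv f c := by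
  rcases eq_or_ne R 0 with rfl | hR
  · simp
  have hR' : 0 < |R| := abs_pos.2 hR
  have conj_on_circle : Set.EqOn (fun z ↦ (z - c)⁻¹ • conj (z - c) • f z)
      (fun z ↦ (R : ℂ) ^ 2 • (1 / (z - c) ^ 2) • f z) (Metric.sphere c |R|) := by
    intro z hz
    have hzc : z - c ≠ 0 := sub_ne_zero.2 (Metric.ne_of_mem_sphere hz hR'.ne')
    have hsq : (z - c) * conj (z - c) = (R : ℂ) ^ 2 := by
      rw [Complex.mul_conj', ← dist_eq_norm, Metric.mem_sphere.1 hz, ← Complex.ofReal_pow, sq_abs,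
        Complex.ofReal_pow]
    simp only [smul_smul, ← hsq]
    congr 1
    field_simp
  rw [← circleAverage_abs_radius, circleAverage_eq_circleIntegral hR'.ne',
    circleIntegral.integral_congr hR'.le conj_on_circle, circleIntegral.integral_smul,
    hf.deriv_eq_smul_circleIntegral hR', smul_comm, inv_smul_smul₀ Complex.two_pi_I_ne_zero]

theorem circleAverage_sub_smul_eq_zero {E : Type*} [NormedAddCommGroup E] [NormedSpace ℂ E]
    [CompleteSpace E] {f : ℂ → E} (hf : DiffContOnCl ℂ f (Metric.ball c |R|)) :
    circleAverage (fun z ↦ (z - c) • f z) c R = 0 := by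
  have hmul : DiffContOnCl ℂ (fun z ↦ (z - c) • f z) (Metric.ball c |R|) :=
    (Differentiable.diffContOnCl (by fun_prop)).smul hf
  simpa using hmul.circleAverage

theorem circleAverage_re_sub_mul_re {f : ℂ → ℂ} (hf : DiffContOnCl ℂ f (Metric.ball c |R|)) :
    circleAverage (fun z ↦ (z - c).re * (f z).re) c R = R ^ 2 / 2 * (deriv f c).re := by
  have hcont : ContinuousOn f (Metric.sphere c |R|) :=
    hf.continuousOn_ball.mono Metric.sphere_subset_closedBall
  have hfi₁ : CircleIntegrable (fun z ↦ (z - c) • f z) c R :=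
    ContinuousOn.circleIntegrable' (by fun_prop)
  have hfi₂ : CircleIntegrable (fun z ↦ conj (z - c) • f z) c R :=
    ContinuousOn.circleIntegrable' (by fun_prop)
  have hre : (fun z ↦ (z - c).re * (f z).re) =
      (2⁻¹ : ℝ) • (Complex.reCLM ∘ fun z ↦ (z - c) • f z + conj (z - c) • f z) := by
    ext z
    simp only [Pi.smul_apply, Function.comp_apply, Complex.reCLM_apply, smul_eq_mul,
      Complex.add_re, Complex.mul_re, Complex.conj_re, Complex.conj_im]
    ring
  rw [hre, circleAverage_smul, Complex.reCLM.circleAverage_comp_comm (hfi₁.fun_add hfi₂),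
    circleAverage_fun_add hfi₁ hfi₂, circleAverage_sub_smul_eq_zero hf,
    circleAverage_conj_sub_smul_eq_deriv hf, zero_add, Complex.reCLM_apply, ← Complex.ofReal_pow,
    smul_eq_mul, smul_eq_mul, Complex.re_ofReal_mul]
  ring

theorem setIntegral_ball_re_sub_mul_re {f : ℂ → ℂ} (hR : 0 ≤ R)
    (hf : DifferentiableOn ℂ f (Metric.ball c R))
    (hfi : IntegrableOn (fun z ↦ (z - c).re * (f z).re) (Metric.ball c R)) :
    ∫ z in Metric.ball c R, (z - c).re * (f z).re = π * R ^ 4 / 4 * (deriv f c).re := by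
  have radial : Set.EqOn (fun r ↦ r • circleAverage (fun z ↦ (z - c).re * (f z).re) c r)
      (fun r ↦ r ^ 3 * ((deriv f c).re / 2)) (Set.Ioo 0 R) := by
    intro r hr
    have hsub : closure (Metric.ball c |r|) ⊆ Metric.ball c R := by
      rw [abs_of_pos hr.1]
      exact Metric.closure_ball_subset_closedBall.trans (Metric.closedBall_subset_ball hr.2)
    simp only [circleAverage_re_sub_mul_re (hf.mono hsub).diffContOnCl, smul_eq_mul]
    ring
  rw [setIntegral_ball_eq_integral_circleAverage hfi,
    setIntegral_congr_fun measurableSet_Ioo radial, integral_mul_const,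
    ← integral_Ioc_eq_integral_Ioo, ← intervalIntegral.integral_of_le hR, integral_pow]
  simp only [smul_eq_mul]
  ring

end Cauchy

lemma hasDerivAt_clog_one_sub {z : ℂ} (hz : ‖z‖ < 1) :
    HasDerivAt (fun w ↦ Complex.log (1 - w)) (-1 / (1 - z)) z := by
  have hslit : 1 - z ∈ Complex.slitPlane := by
    simpa [sub_eq_add_neg] using Complex.mem_slitPlane_of_norm_lt_one (z := -z) (by simpa)
  exact ((hasDerivAt_id z).const_sub 1).clog hslit

lemma log_one_sub_re_sq_add_im_sq (z : ℂ) :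
    log ((1 - z.re) ^ 2 + z.im ^ 2) = 2 * (Complex.log (1 - z)).re := by
  have hnorm : (1 - z.re) ^ 2 + z.im ^ 2 = ‖1 - z‖ ^ 2 := by
    rw [Complex.sq_norm, Complex.normSq_apply, Complex.sub_re, Complex.sub_im, Complex.one_re,
      Complex.one_im]
    ring
  rw [hnorm, log_pow, Complex.log_re, Nat.cast_ofNat]

lemma integrableOn_ball_re_sub_mul_re_clog_sub (a c : ℂ) (R : ℝ) :
    IntegrableOn (fun z ↦ (z - c).re * (Complex.log (a - z)).re) (Metric.ball c R) := by
  simp only [Complex.log_re, norm_sub_rev a]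
  exact (integrableOn_ball_log_norm_sub volume a c R).continuousOn_mul_of_subset
    (by fun_prop) (isCompact_closedBall c R) measurableSet_ball Metric.ball_subset_closedBall

/-- ∫_𝔻 x₁ log|1−x|² dx = −π/2. -/
theorem integral_x1_log_disk :
    ∫ x in unitDisk, x.re * Real.log ((1 - x.re) ^ 2 + x.im ^ 2) = -π / 2 := by
  have hdiff : DifferentiableOn ℂ (fun z ↦ Complex.log (1 - z)) (Metric.ball 0 1) := fun z hz ↦
    (hasDerivAt_clog_one_sub (mem_ball_zero_iff.1 hz)).differentiableAt.differentiableWithinAt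
  have hderiv : deriv (fun z ↦ Complex.log (1 - z)) 0 = -1 := by
    simpa using (hasDerivAt_clog_one_sub (z := 0) (by simp)).deriv
  calc ∫ x in unitDisk, x.re * Real.log ((1 - x.re) ^ 2 + x.im ^ 2)
      = 2 * ∫ x in Metric.ball 0 1, (x - 0).re * (Complex.log (1 - x)).re := by
        simp only [log_one_sub_re_sq_add_im_sq, ← integral_const_mul, unitDisk, sub_zero,
          mul_left_comm]
    _ = 2 * (π * 1 ^ 4 / 4 * (-1 : ℂ).re) := by
        rw [setIntegral_ball_re_sub_mul_re zero_le_one hdiff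
          (integrableOn_ball_re_sub_mul_re_clog_sub 1 0 1), hderiv]
    _ = -π / 2 := by
        rw [Complex.neg_re, Complex.one_re]
        ring

end
end
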